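/- Let d ≥ 1, let ε > 0, and let x₁, …, xₙ be pairwise distinct points in ℝ^d with n ≥ 1. Then the n × n Gaussian radial basis function interpolation matrix A with entries A_{ij} = exp(−ε² ‖xᵢ − xⱼ‖²) is symmetric positive definite; in particular, A is nonsingular. -/

import Mathlib

/-!
Since `‖u - v‖² = ‖u‖² - 2⟪u, v⟫ + ‖v‖²`, the Gaussian matrix is `D K D` with `D` the invertible
diagonal matrix of entries `exp (-ε²‖xᵢ‖²)` and `K` the matrix of the exponential kernel
`exp (2ε²⟪u, v⟫)`, so it suffices that `K` is positive definite.

* `Matrix.PosSemidef.map_exp`: the entrywise exponential of a positive semidefinite matrix is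
  positive semidefinite, by the Schur product theorem and the power series of `exp`. Applied to a
  Gram matrix, it shows that the exponential kernel is positive semidefinite at any finite family
  of points.
* `posDef_expKernel`: if `cᵀ K c = 0`, then adjoining an arbitrary further node `y`, with
  coefficient `0`, gives a positive semidefinite matrix with the same vanishing quadratic form.
  Hence `c`, extended by `0`, lies in its kernel, and the row of `y` reads
  `∑ⱼ cⱼ exp (2ε²⟪y, xⱼ⟫) = 0`. As `y` is arbitrary, this is a linear relation between the
  characters `y ↦ exp (2ε²⟪y, xⱼ⟫)`, which are distinct, hence linearly independent (Dedekind).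
-/

open Matrix in
/-- The entrywise exponential of a positive semidefinite matrix is positive semidefinite: it is
the sum of the series of its Hadamard powers, with coefficients `1 / k!`. -/
theorem Matrix.PosSemidef.map_exp {ι : Type*} [Fintype ι] {A : Matrix ι ι ℝ}
    (hA : A.PosSemidef) : (A.map Real.exp).PosSemidef := by
  have hpow : ∀ k : ℕ, (A.map (· ^ k)).PosSemidef := by
    intro k
    induction k with
    | zero =>
      -- the zeroth Hadamard power is the all-ones matrix `1 1ᵀ`
      have h := posSemidef_vecMulVec_self_star (fun _ : ι => (1 : ℝ))
      convert h using 1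
      ext i j
      simp [vecMulVec_apply]
    | succ k ih =>
      have h : A.map (· ^ (k + 1)) = A.map (· ^ k) ⊙ A := by
        ext i j
        simp [pow_succ]
      rw [h]
      exact ih.hadamard hA
  refine .of_dotProduct_mulVec_nonneg ?_ fun c => ?_
  · ext i j
    have h := hA.isHermitian.apply i j
    simp only [star_trivial] at h
    simp [h]
  · have hsum : HasSum (fun k : ℕ => ∑ i, c i * ∑ j, A i j ^ k / (k.factorial : ℝ) * c j)
        (∑ i, c i * ∑ j, Real.exp (A i j) * c j) := by
      refine hasSum_sum fun i _ => HasSum.mul_left _ <| hasSum_sum fun j _ =>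
        HasSum.mul_right _ ?_
      rw [Real.exp_eq_exp_ℝ]
      exact NormedSpace.expSeries_div_hasSum_exp (A i j)
    have hnonneg := hsum.nonneg fun k => by
      have h := mul_nonneg (inv_nonneg.2 (Nat.cast_nonneg (α := ℝ) k.factorial))
        ((hpow k).dotProduct_mulVec_nonneg c)
      convert h using 1
      simp only [dotProduct, mulVec, Finset.mul_sum, map_apply, star_trivial]
      refine Finset.sum_congr rfl fun i _ => Finset.sum_congr rfl fun j _ => ?_
      ring
    simpa [dotProduct, mulVec] using hnonneg

section ExpKernel

variable {E : Type*} [NormedAddCommGroup E] [InnerProductSpace ℝ E]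

/-- The matrix `exp (s⟪vᵢ, vⱼ⟫)` of the exponential kernel with parameter `s` at the
points `vᵢ`. -/
noncomputable def expKernel {ι : Type*} (s : ℝ) (v : ι → E) : Matrix ι ι ℝ :=
  Matrix.of fun i j => Real.exp (s * inner ℝ (v i) (v j))

theorem posSemidef_expKernel {ι : Type*} [Fintype ι] {s : ℝ} (hs : 0 ≤ s) (v : ι → E) :
    (expKernel s v).PosSemidef :=
  ((Matrix.posSemidef_gram ℝ v).smul hs).map_exp

/-- The character `y ↦ exp (s⟪y, v⟫)` of the additive group `E`. -/
noncomputable def expChar (s : ℝ) (v : E) : Multiplicative E →* ℝ where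
  toFun y := Real.exp (s * inner ℝ y.toAdd v)
  map_one' := by simp
  map_mul' y z := by simp [inner_add_left, mul_add, Real.exp_add]

theorem expChar_injective {s : ℝ} (hs : s ≠ 0) :
    Function.Injective (expChar (E := E) s) := by
  intro v w h
  refine ext_inner_left ℝ fun y => ?_
  have hy := DFunLike.congr_fun h (Multiplicative.ofAdd y)
  exact mul_left_cancel₀ hs (Real.exp_injective hy)

open Matrix in
theorem posDef_expKernel {ι : Type*} [Fintype ι] {s : ℝ} (hs : 0 < s) {v : ι → E}
    (hv : Function.Injective v) : (expKernel s v).PosDef := by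
  have hK := posSemidef_expKernel hs.le v
  refine .of_dotProduct_mulVec_pos hK.isHermitian fun c hc => ?_
  refine (hK.dotProduct_mulVec_nonneg c).lt_of_ne' fun h0 => hc ?_
  have hchar : ∀ y : E, ∑ j, c j * Real.exp (s * inner ℝ y (v j)) = 0 := by
    intro y
    -- adjoin the node `y`, indexed by `none`, with coefficient `0`
    have hK' := posSemidef_expKernel hs.le (fun o : Option ι => o.elim y v)
    have h0' := (hK'.dotProduct_mulVec_zero_iff (fun o : Option ι => o.elim 0 c)).1 (by
      simpa [dotProduct, mulVec, expKernel, Fintype.sum_option] using h0)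
    have h := congrFun h0' none
    simpa [dotProduct, mulVec, expKernel, Fintype.sum_option, mul_comm] using h
  have hind := (linearIndependent_monoidHom (Multiplicative E) ℝ).comp
    (fun j => expChar s (v j)) ((expChar_injective hs.ne').comp hv)
  funext j
  refine Fintype.linearIndependent_iff.1 hind c ?_ j
  funext y
  simpa [expChar] using hchar y.toAdd

end ExpKernel

/-- The Gaussian RBF interpolation matrix `A_{ij} = exp(−ε²‖xᵢ − xⱼ‖²)` built on pairwise
distinct nodes `x₁, …, xₙ` in ℝ^d is symmetric positive definite; in particular it is
nonsingular. -/
theorem gaussian_rbf_interpolation_matrix_posDef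
    (d n : ℕ) (hd : 1 ≤ d) (hn : 1 ≤ n) (ε : ℝ) (hε : 0 < ε)
    (x : Fin n → EuclideanSpace ℝ (Fin d)) (hx : Function.Injective x) :
    (Matrix.of fun i j : Fin n => Real.exp (-(ε ^ 2) * ‖x i - x j‖ ^ 2)).IsSymm ∧
      (Matrix.of fun i j : Fin n => Real.exp (-(ε ^ 2) * ‖x i - x j‖ ^ 2)).PosDef ∧
      (Matrix.of fun i j : Fin n => Real.exp (-(ε ^ 2) * ‖x i - x j‖ ^ 2)).det ≠ 0 := by
  have hpos :
      (Matrix.of fun i j : Fin n => Real.exp (-(ε ^ 2) * ‖x i - x j‖ ^ 2)).PosDef := by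
    have hK := posDef_expKernel (s := 2 * ε ^ 2) (by positivity) hx
    have hD : Function.Injective
        (Matrix.diagonal fun i => Real.exp (-(ε ^ 2) * ‖x i‖ ^ 2)).mulVec := by
      intro c c' h
      funext i
      have hi := congrFun h i
      simpa [Matrix.mulVec_diagonal] using hi
    convert hK.conjTranspose_mul_mul_same hD using 1
    ext i j
    simp only [Matrix.diagonal_conjTranspose, Matrix.mul_diagonal, Matrix.diagonal_mul,
      Matrix.of_apply, expKernel, star_trivial, ← Real.exp_add]
    rw [norm_sub_sq_real]
    congr 1
    ring
  refine ⟨?_, hpos, hpos.det_pos.ne'⟩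
  ext i j
  simp [norm_sub_rev]
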